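/- Let t ≥ 3 be an integer and let M be a matroid admitting a cyclic (t−1,t)-ordering e_1, e_2, …, e_n with n ≥ 6t−10. (i) Suppose that for some index i the set σ[i, i+t−1] is a t-element circuit of M containing X_i. Then for every index j with j ≡ i (mod 2): every t-element circuit of M containing X_j equals σ[j, j+t−1], and every t-element circuit of M containing X_{j+1} equals σ[j, j+t−1]. (ii) The same statement holds with 'circuit' replaced by 'cocircuit' throughout. -/

import Mathlib

open Set

namespace CyclicArr

variable {α : Type*}

/-- `C` is a circuit of the matroid `M`: a minimal dependent set. -/
def Cct (M : Matroid α) (C : Set α) : Prop := Minimal M.Dep C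

/-- The set of `len` consecutive elements `{e_i, e_{i+1}, …, e_{i+len-1}}`
in a cyclic ordering `e`, subscripts mod `n`. -/
def seg {n : ℕ} (e : ZMod n → α) (i : ℤ) (len : ℕ) : Set α :=
  (fun k : ℕ => e ((i + k : ℤ) : ZMod n)) '' Set.Iio len

/-- `e` is a cyclic ordering of (the ground set of) `M`. -/
def CyclicOrd {n : ℕ} (M : Matroid α) (e : ZMod n → α) : Prop :=
  Function.Injective e ∧ Set.range e = M.E

/-- `e` is a cyclic `(t-1, t)`-ordering of `M`: every `t-1` consecutive elements
are contained in a `t`-element circuit and a `t`-element cocircuit. -/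
def CyclicPropOrd {n : ℕ} (M : Matroid α) (t : ℕ) (e : ZMod n → α) : Prop :=
  CyclicOrd M e ∧
  ∀ i : ℤ, (∃ C, Cct M C ∧ C.ncard = t ∧ seg e i (t-1) ⊆ C) ∧
           (∃ C, Cct M✶ C ∧ C.ncard = t ∧ seg e i (t-1) ⊆ C)

/-!
Only one property of circuits and cocircuits is used: they never meet in exactly one element.

Write `X_k` for the arc of `t - 1` elements starting at `e_k`, and let `A`, `B` be circuits. If
`X_k` avoids `A`, then a `t`-element cocircuit containing `X_k` avoids `A` too, since it has only
one further element. If `X_k` also meets `B` in a single element, then that further element lies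
in `B \ A`.

Let `A = σ[i, i+t-1]` be a circuit. If `B \ A` were a singleton, an arc `X_k` through that element
would give a contradiction, so `A` is the only `t`-element circuit containing `X_i` or `X_{i+1}`.
Now let `B = X_{i+2} ∪ {e_c}` be a circuit with `c ≠ i + t + 1`. For the same reason `e_c` is not
in `A`, so `B \ A = {e_{i+t}, e_c}`.
If `c ≠ i - 1`, then `e_c` lies in two consecutive arcs missing `A ∪ {e_{i+t}}`, and completing
both by `e_{i+t}` gives cocircuits that differ in one element. If `c = i - 1`, then
`X_{i-t+1} ∪ {e_{i+t}}` is a cocircuit; comparing it with a cocircuit on `X_{i-t+2}` shows that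
`X_{i-2t+3} ∪ {e_{i+t}}` is a circuit, which meets a cocircuit on `X_{i+t-1}` in `e_{i+t}` alone.
Hence `σ[i+2, i+t+1]` is a circuit, and the pattern propagates around the cycle.
-/

section Seg

variable {n : ℕ} {e : ZMod n → α} {a b i k : ℤ} {len m : ℕ}

theorem mem_seg_iff {x : α} :
    x ∈ seg e i len ↔ ∃ a : ℤ, i ≤ a ∧ a < i + len ∧ e a = x := by
  constructor
  · rintro ⟨k, hk, rfl⟩
    rw [mem_Iio] at hk
    exact ⟨i + k, by omega, by omega, rfl⟩
  · rintro ⟨a, hia, hai, rfl⟩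
    refine ⟨(a - i).toNat, by rw [mem_Iio]; omega, ?_⟩
    simp only [Int.toNat_of_nonneg (sub_nonneg.2 hia), add_sub_cancel]

theorem apply_mem_seg (hia : i ≤ a) (hai : a < i + len) : e a ∈ seg e i len :=
  mem_seg_iff.2 ⟨a, hia, hai, rfl⟩

theorem seg_subset_seg (hik : i ≤ k) (hki : k + m ≤ i + len) : seg e k m ⊆ seg e i len := by
  intro x hx
  obtain ⟨a, hka, hak, rfl⟩ := mem_seg_iff.1 hx
  exact apply_mem_seg (by omega) (by omega)

theorem seg_congr (h : (i : ZMod n) = k) : seg e i len = seg e k len := by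
  simp only [seg, Int.cast_add, h]

theorem exists_int_apply_eq [NeZero n] {x : α} (hx : x ∈ range e) (w : ℤ) :
    ∃ a : ℤ, w ≤ a ∧ a < w + n ∧ e a = x := by
  obtain ⟨z, rfl⟩ := hx
  obtain ⟨m, hm⟩ : ∃ m : ℕ, m < n ∧ (m : ZMod n) = z - w :=
    ⟨_, (z - w).val_lt, ZMod.natCast_zmod_val _⟩
  exact ⟨w + m, by omega, by omega, by simp [hm.2]⟩

theorem insert_last_seg (hlen : 0 < len) :
    insert (e ((i + len - 1 : ℤ) : ZMod n)) (seg e i (len - 1)) = seg e i len := by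
  ext x
  simp only [mem_insert_iff, mem_seg_iff]
  constructor
  · rintro (rfl | ⟨a, hia, hai, rfl⟩)
    · exact ⟨_, by omega, by omega, rfl⟩
    · exact ⟨a, hia, by omega, rfl⟩
  · rintro ⟨a, hia, hai, rfl⟩
    obtain rfl | hne := eq_or_ne a (i + len - 1)
    · exact Or.inl rfl
    · exact Or.inr ⟨a, hia, by omega, rfl⟩

theorem seg_sdiff_seg_subset_last (hik : i ≤ k) (hki : k + m ≤ i + len + 1) :
    seg e k m \ seg e i len ⊆ {e ((i + len : ℤ) : ZMod n)} := by
  rintro x ⟨hxk, hxi⟩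
  obtain ⟨a, hka, hak, rfl⟩ := mem_seg_iff.1 hxk
  obtain rfl : a = i + len := by
    by_contra hne
    exact hxi (apply_mem_seg (by omega) (by omega))
  rfl

theorem seg_sdiff_seg_subset_first (hik : k ≤ i + 1) (hki : i + m ≤ k + len) :
    seg e i m \ seg e k len ⊆ {e i} := by
  rintro x ⟨hxi, hxk⟩
  obtain ⟨a, hia, hai, rfl⟩ := mem_seg_iff.1 hxi
  obtain rfl : a = i := by
    by_contra hne
    exact hxk (apply_mem_seg (by omega) (by omega))
  rfl

theorem insert_seg_add_two_sdiff_subset_pair {x : α} (hlen : 0 < len) :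
    insert x (seg e (i + 2) (len - 1)) \ seg e i len ⊆ {x, e ((i + len : ℤ) : ZMod n)} := by
  rintro y ⟨rfl | hy, hyA⟩
  · exact Or.inl rfl
  · exact Or.inr (seg_sdiff_seg_subset_last (by omega) (by omega) ⟨hy, hyA⟩)

theorem apply_int_inj (he : Function.Injective e) (hab : a < b + n) (hba : b < a + n) :
    e a = e b ↔ a = b := by
  refine ⟨fun h ↦ ?_, fun h ↦ h ▸ rfl⟩
  have hdvd := (ZMod.intCast_eq_intCast_iff_dvd_sub _ _ _).1 (he h)
  have := Int.eq_zero_of_abs_lt_dvd hdvd (abs_lt.2 ⟨by omega, by omega⟩)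
  omega

theorem apply_mem_seg_iff (he : Function.Injective e) (hia : i + len ≤ a + n) (hai : a < i + n) :
    e a ∈ seg e i len ↔ i ≤ a ∧ a < i + len := by
  refine ⟨fun h ↦ ?_, fun h ↦ apply_mem_seg h.1 h.2⟩
  obtain ⟨b, hib, hbi, hba⟩ := mem_seg_iff.1 h
  rw [apply_int_inj he (by omega) (by omega)] at hba
  omega

theorem disjoint_seg (he : Function.Injective e) (hik : i + len ≤ k) (hki : k + m ≤ i + n) :
    Disjoint (seg e i len) (seg e k m) := by
  rw [disjoint_left]
  intro x hxi hxk
  obtain ⟨a, hka, hak, rfl⟩ := mem_seg_iff.1 hxk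
  rw [apply_mem_seg_iff he (by omega) (by omega)] at hxi
  omega

theorem seg_inter_seg_eq_singleton (he : Function.Injective e) (hlen : 0 < len) (hm : 0 < m)
    (hik : i + len = k + 1) (hki : k + m ≤ i + n) : seg e i len ∩ seg e k m = {e k} := by
  refine Subset.antisymm ?_ (singleton_subset_iff.2
    ⟨apply_mem_seg (by omega) (by omega), apply_mem_seg le_rfl (by omega)⟩)
  rintro x ⟨hxi, hxk⟩
  obtain ⟨a, hka, hak, rfl⟩ := mem_seg_iff.1 hxk
  rw [apply_mem_seg_iff he (by omega) (by omega)] at hxi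
  obtain rfl : a = k := by omega
  rfl

theorem ncard_seg (he : Function.Injective e) (hlen : len ≤ n) : (seg e i len).ncard = len := by
  have hinj : InjOn (fun k : ℕ ↦ e ((i + k : ℤ) : ZMod n)) (Iio len) := by
    intro a ha b hb hab
    rw [mem_Iio] at ha hb
    have := (apply_int_inj he (by omega) (by omega)).1 hab
    omega
  rw [seg, hinj.ncard_image]
  simp [ncard_eq_toFinset_card']

theorem finite_seg : (seg e i len).Finite := (finite_Iio len).image _

theorem exists_eq_insert_seg (he : Function.Injective e) {C : Set α} (hlen : len ≤ n)
    (hcard : C.ncard = len + 1) (hsub : seg e i len ⊆ C) :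
    ∃ y ∉ seg e i len, insert y (seg e i len) = C :=
  (exists_eq_insert_iff_ncard finite_seg).2 ⟨hsub, by rw [ncard_seg he hlen, hcard]⟩

end Seg

/-- The combinatorial shadow of a cyclic `(t-1, t)`-ordering: two families `P` and `Q` of subsets of
the cyclically ordered set, playing the roles of the circuits and the cocircuits, such that a member
of `P` and a member of `Q` never meet in exactly one element, and every `t - 1` consecutive elements
lie in a `t`-element member of each family. -/
structure IsOrthogonalCover {n : ℕ} (P Q : Set α → Prop) (t : ℕ) (e : ZMod n → α) : Prop where
  injective : Function.Injective e
  left_subset_range : ∀ C, P C → C ⊆ range e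
  right_subset_range : ∀ D, Q D → D ⊆ range e
  inter_ne_singleton : ∀ C D x, P C → Q D → C ∩ D ≠ {x}
  exists_left : ∀ i : ℤ, ∃ C, P C ∧ C.ncard = t ∧ seg e i (t - 1) ⊆ C
  exists_right : ∀ i : ℤ, ∃ D, Q D ∧ D.ncard = t ∧ seg e i (t - 1) ⊆ D

theorem CyclicPropOrd.isOrthogonalCover {n t : ℕ} {M : Matroid α} {e : ZMod n → α}
    (he : CyclicPropOrd M t e) : IsOrthogonalCover (Cct M) (Cct M✶) t e where
  injective := he.1.1
  left_subset_range _ hC := he.1.2 ▸ hC.prop.subset_ground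
  right_subset_range _ hD := he.1.2 ▸ hD.prop.subset_ground
  inter_ne_singleton _ _ _ hC hD :=
    Matroid.IsCircuit.inter_isCocircuit_ne_singleton (M := M) hC hD
  exists_left i := (he.2 i).1
  exists_right i := (he.2 i).2

namespace IsOrthogonalCover

variable {n t : ℕ} {P Q : Set α → Prop} {e : ZMod n → α} {i j k : ℤ} {x y : α} {A B : Set α}

theorem symm (h : IsOrthogonalCover P Q t e) : IsOrthogonalCover Q P t e where
  injective := h.injective
  left_subset_range := h.right_subset_range
  right_subset_range := h.left_subset_range
  inter_ne_singleton D C x hD hC := inter_comm C D ▸ h.inter_ne_singleton C D x hC hD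
  exists_left := h.exists_right
  exists_right := h.exists_left

theorem notMem_of_disjoint (h : IsOrthogonalCover P Q t e) {X : Set α} (hA : P A)
    (hXA : Disjoint X A) (hX : Q (insert y X)) : y ∉ A := by
  intro hyA
  apply h.inter_ne_singleton A (insert y X) y hA hX
  rw [inter_insert_of_mem hyA, hXA.symm.inter_eq, insert_empty_eq]

theorem exists_insert_right (h : IsOrthogonalCover P Q t e) (ht : 0 < t) (htn : t ≤ n) (k : ℤ) :
    ∃ y ∉ seg e k (t - 1), Q (insert y (seg e k (t - 1))) := by
  obtain ⟨D, hD, hcard, hsub⟩ := h.exists_right k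
  obtain ⟨y, hy, rfl⟩ := exists_eq_insert_seg h.injective (by omega) (by omega) hsub
  exact ⟨y, hy, hD⟩

theorem exists_right_insert_of_inter_eq_singleton (h : IsOrthogonalCover P Q t e) (ht : 0 < t)
    (htn : t ≤ n) (hB : P B) (hXB : seg e k (t - 1) ∩ B = {x}) :
    ∃ y ∈ B, y ∉ seg e k (t - 1) ∧ Q (insert y (seg e k (t - 1))) := by
  obtain ⟨y, hyX, hQ⟩ := h.exists_insert_right ht htn k
  refine ⟨y, ?_, hyX, hQ⟩
  by_contra hyB
  exact h.inter_ne_singleton B _ x hB hQ (by rw [inter_insert_of_notMem hyB, inter_comm, hXB])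

theorem right_insert_of_sdiff_subset_pair (h : IsOrthogonalCover P Q t e) (ht : 0 < t)
    (htn : t ≤ n) (hA : P A) (hB : P B) (hXA : Disjoint (seg e k (t - 1)) A)
    (hBA : B \ A ⊆ {x, y}) (hxB : x ∈ B) (hx : x ∈ seg e k (t - 1)) (hy : y ∉ seg e k (t - 1)) :
    Q (insert y (seg e k (t - 1))) := by
  have hXB : seg e k (t - 1) ∩ B = {x} := by
    refine Subset.antisymm (fun z ⟨hzX, hzB⟩ ↦ ?_) (singleton_subset_iff.2 ⟨hx, hxB⟩)
    exact (hBA ⟨hzB, disjoint_left.1 hXA hzX⟩).resolve_right fun hzy ↦ hy (hzy ▸ hzX)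
  obtain ⟨z, hzB, hzX, hQ⟩ := h.exists_right_insert_of_inter_eq_singleton ht htn hB hXB
  obtain rfl | rfl := hBA ⟨hzB, h.notMem_of_disjoint hA hXA hQ⟩
  · exact absurd hx hzX
  · exact hQ

theorem not_sdiff_subset_singleton (h : IsOrthogonalCover P Q t e) (ht : 0 < t) (htn : t ≤ n)
    (hA : P A) (hB : P B) (hXA : Disjoint (seg e k (t - 1)) A) (hxB : x ∈ B)
    (hx : x ∈ seg e k (t - 1)) : ¬ B \ A ⊆ {x} := by
  intro hBA
  have hXB : seg e k (t - 1) ∩ B = {x} :=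
    Subset.antisymm (fun z ⟨hzX, hzB⟩ ↦ hBA ⟨hzB, disjoint_left.1 hXA hzX⟩)
      (singleton_subset_iff.2 ⟨hx, hxB⟩)
  obtain ⟨z, hzB, hzX, hQ⟩ := h.exists_right_insert_of_inter_eq_singleton ht htn hB hXB
  obtain rfl := hBA ⟨hzB, h.notMem_of_disjoint hA hXA hQ⟩
  exact hzX hx

theorem subset_seg_of_sdiff_subset_singleton (h : IsOrthogonalCover P Q t e) (ht : 2 ≤ t)
    (hn : 2 * t ≤ n + 1) (hA : P (seg e i t)) (hB : P B) (hBA : B \ seg e i t ⊆ {x}) :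
    B ⊆ seg e i t := by
  by_contra hsub
  obtain ⟨y, hyB, hyA⟩ := not_subset.1 hsub
  obtain rfl := hBA ⟨hyB, hyA⟩
  have : NeZero n := ⟨by omega⟩
  obtain ⟨a, hia, hai, rfl⟩ := exists_int_apply_eq (h.left_subset_range B hB hyB) i
  rw [apply_mem_seg_iff h.injective (by omega) (by omega)] at hyA
  have hdisj : Disjoint (seg e (min a (i + n - t + 1)) (t - 1)) (seg e i t) :=
    (disjoint_seg h.injective (by omega) (by omega)).symm
  exact h.not_sdiff_subset_singleton (by omega) (by omega) hA hB hdisj hyB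
    (apply_mem_seg (by omega) (by omega)) hBA

theorem eq_seg_of_seg_subset (h : IsOrthogonalCover P Q t e) (ht : 2 ≤ t) (hn : 2 * t ≤ n + 1)
    (hA : P (seg e i t)) (hB : P B) (hcard : B.ncard = t) (hjA : seg e j (t - 1) ⊆ seg e i t)
    (hjB : seg e j (t - 1) ⊆ B) : B = seg e i t := by
  obtain ⟨x, -, rfl⟩ := exists_eq_insert_seg h.injective (by omega) (by omega) hjB
  have hsdiff : insert x (seg e j (t - 1)) \ seg e i t ⊆ {x} := by
    rintro y ⟨rfl | hy, hyA⟩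
    · rfl
    · exact absurd (hjA hy) hyA
  refine eq_of_subset_of_ncard_le
    (h.subset_seg_of_sdiff_subset_singleton ht hn hA hB hsdiff) ?_ finite_seg
  rw [hcard, ncard_seg h.injective (by omega)]

theorem not_insert_seg_succ (h : IsOrthogonalCover P Q t e) (ht : 2 ≤ t) (hn : 2 * t ≤ n + 2)
    (hx : x ∉ seg e (j + t - 1) (t - 1)) (hj : P (insert x (seg e j (t - 1)))) :
    ¬ P (insert x (seg e (j + 1) (t - 1))) := by
  intro hj'
  have hdisj : Disjoint (seg e (j + t - 1) (t - 1)) (insert x (seg e j (t - 1))) :=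
    disjoint_insert_right.2 ⟨hx, (disjoint_seg h.injective (by omega) (by omega)).symm⟩
  refine h.not_sdiff_subset_singleton (x := e ((j + (t - 1 : ℕ) : ℤ) : ZMod n))
    (by omega) (by omega) hj hj' hdisj (Or.inr (apply_mem_seg (by omega) (by omega)))
    (apply_mem_seg (by omega) (by omega)) ?_
  rintro y ⟨rfl | hy, hy'⟩
  · exact absurd (mem_insert _ _) hy'
  · exact seg_sdiff_seg_subset_last (by omega) (by omega) ⟨hy, fun hyj ↦ hy' (Or.inr hyj)⟩

theorem not_insert_seg_add_two_of_le (h : IsOrthogonalCover P Q t e) {c : ℤ} (ht : 3 ≤ t)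
    (hn : 2 * t + 1 ≤ n) (hA : P (seg e i t)) (hic : i + t + 2 ≤ c) (hci : c + 2 ≤ i + n) :
    ¬ P (insert (e c) (seg e (i + 2) (t - 1))) := by
  intro hB
  have hQ (k : ℤ) (hik : i + t + 1 ≤ k) (hki : k + t - 1 ≤ i + n) (hkc : k ≤ c)
      (hck : c < k + t - 1) : Q (insert (e ((i + t : ℤ) : ZMod n)) (seg e k (t - 1))) := by
    refine h.right_insert_of_sdiff_subset_pair (by omega) (by omega) hA hB
      (disjoint_seg h.injective (by omega) (by omega)).symm
      (insert_seg_add_two_sdiff_subset_pair (by omega)) (mem_insert _ _)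
      (apply_mem_seg hkc (by omega)) ?_
    rw [apply_mem_seg_iff h.injective (by omega) (by omega)]
    omega
  obtain ⟨j, hij, hji, hjc, hcj⟩ :
      ∃ j, i + t + 1 ≤ j ∧ j + t ≤ i + n ∧ j + 1 ≤ c ∧ c < j + t - 1 :=
    ⟨max (c - t + 2) (i + t + 1), by omega, by omega, by omega, by omega⟩
  refine h.symm.not_insert_seg_succ (by omega) (by omega) ?_
    (hQ j hij (by omega) (by omega) hcj) (hQ (j + 1) (by omega) (by omega) hjc (by omega))
  rw [apply_mem_seg_iff h.injective (by omega) (by omega)]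
  omega

theorem exists_right_insert_seg_overlap_first (h : IsOrthogonalCover P Q t e) (ht : 2 ≤ t)
    (hn : 2 * t ≤ n + 2) (hA : P (seg e i t)) :
    ∃ y ∈ seg e i t, Q (insert y (seg e (i - t + 2) (t - 1))) := by
  have hinter : seg e (i - t + 2) (t - 1) ∩ seg e i t = {e i} :=
    seg_inter_seg_eq_singleton h.injective (by omega) (by omega) (by omega) (by omega)
  obtain ⟨y, hy, -, hQ⟩ :=
    h.exists_right_insert_of_inter_eq_singleton (by omega) (by omega) hA hinter
  exact ⟨y, hy, hQ⟩

theorem exists_right_insert_seg_overlap_last (h : IsOrthogonalCover P Q t e) (ht : 2 ≤ t)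
    (hn : 2 * t ≤ n + 2) (hA : P (seg e i t)) :
    ∃ y ∈ seg e i t, Q (insert y (seg e (i + t - 1) (t - 1))) := by
  have hinter : seg e i t ∩ seg e (i + t - 1) (t - 1) = {e ((i + t - 1 : ℤ) : ZMod n)} :=
    seg_inter_seg_eq_singleton h.injective (by omega) (by omega) (by omega) (by omega)
  rw [inter_comm] at hinter
  obtain ⟨y, hy, -, hQ⟩ :=
    h.exists_right_insert_of_inter_eq_singleton (by omega) (by omega) hA hinter
  exact ⟨y, hy, hQ⟩

theorem right_insert_of_insert_pred_seg_add_two (h : IsOrthogonalCover P Q t e) (ht : 2 ≤ t)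
    (hn : 2 * t ≤ n) (hA : P (seg e i t))
    (hB : P (insert (e ((i - 1 : ℤ) : ZMod n)) (seg e (i + 2) (t - 1)))) :
    Q (insert (e ((i + t : ℤ) : ZMod n)) (seg e (i - t + 1) (t - 1))) := by
  refine h.right_insert_of_sdiff_subset_pair (by omega) (by omega) hA hB
    (disjoint_seg h.injective (by omega) (by omega))
    (insert_seg_add_two_sdiff_subset_pair (by omega)) (mem_insert _ _)
    (apply_mem_seg (by omega) (by omega)) ?_
  rw [apply_mem_seg_iff h.injective (by omega) (by omega)]
  omega

theorem not_insert_pred_seg_add_two (h : IsOrthogonalCover P Q t e) (ht : 3 ≤ t)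
    (hn : 4 * t ≤ n + 5) (hA : P (seg e i t)) :
    ¬ P (insert (e ((i - 1 : ℤ) : ZMod n)) (seg e (i + 2) (t - 1))) := by
  intro hB
  have hD := h.right_insert_of_insert_pred_seg_add_two (by omega) (by omega) hA hB
  obtain ⟨l, hlA, hL⟩ := h.exists_right_insert_seg_overlap_first (by omega) (by omega) hA
  obtain ⟨r, hrA, hR⟩ := h.exists_right_insert_seg_overlap_last (by omega) (by omega) hA
  have hXA : Disjoint (seg e (i - 2 * t + 3) (t - 1)) (seg e i t) :=
    disjoint_seg h.injective (by omega) (by omega)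
  have hXL : Disjoint (seg e (i - 2 * t + 3) (t - 1)) (insert l (seg e (i - t + 2) (t - 1))) :=
    disjoint_insert_right.2
      ⟨disjoint_right.1 hXA hlA, disjoint_seg h.injective (by omega) (by omega)⟩
  have hXR : Disjoint (seg e (i - 2 * t + 3) (t - 1)) (insert r (seg e (i + t - 1) (t - 1))) :=
    disjoint_insert_right.2
      ⟨disjoint_right.1 hXA hrA, disjoint_seg h.injective (by omega) (by omega)⟩
  have hDL : insert (e ((i + t : ℤ) : ZMod n)) (seg e (i - t + 1) (t - 1)) \
      insert l (seg e (i - t + 2) (t - 1)) ⊆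
        {e ((i - t + 1 : ℤ) : ZMod n), e ((i + t : ℤ) : ZMod n)} := by
    rintro y ⟨rfl | hy, hyL⟩
    · exact Or.inr rfl
    · exact Or.inl (seg_sdiff_seg_subset_first (by omega) (by omega)
        ⟨hy, fun hy' ↦ hyL (Or.inr hy')⟩)
  have hC : P (insert (e ((i + t : ℤ) : ZMod n)) (seg e (i - 2 * t + 3) (t - 1))) := by
    refine h.symm.right_insert_of_sdiff_subset_pair (by omega) (by omega) hL hD hXL hDL
      (Or.inr (apply_mem_seg le_rfl (by omega))) (apply_mem_seg (by omega) (by omega)) ?_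
    rw [apply_mem_seg_iff h.injective (by omega) (by omega)]
    omega
  exact h.symm.notMem_of_disjoint hR hXR hC (Or.inr (apply_mem_seg (by omega) (by omega)))

theorem left_seg_add_two (h : IsOrthogonalCover P Q t e) (ht : 3 ≤ t) (hn : 4 * t ≤ n + 5)
    (hA : P (seg e i t)) : P (seg e (i + 2) t) := by
  have : NeZero n := ⟨by omega⟩
  obtain ⟨x, hxX, hB⟩ := h.symm.exists_insert_right (by omega) (by omega) (i + 2)
  obtain ⟨c, hic, hci, rfl⟩ :=
    exists_int_apply_eq (h.left_subset_range _ hB (mem_insert _ _)) (i - 1)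
  rw [apply_mem_seg_iff h.injective (by omega) (by omega)] at hxX
  have hc_pred : c ≠ i - 1 := by
    rintro rfl
    exact h.not_insert_pred_seg_add_two ht hn hA hB
  have hc_far : ¬ i + t + 2 ≤ c := fun hc ↦
    h.not_insert_seg_add_two_of_le ht (by omega) hA hc (by omega) hB
  have hc_seg : ¬ c < i + t := by
    intro hc
    have hsdiff : insert (e c) (seg e (i + 2) (t - 1)) \ seg e i t ⊆
        {e ((i + t : ℤ) : ZMod n)} := fun y hy ↦
      (insert_seg_add_two_sdiff_subset_pair (by omega) hy).resolve_left fun hyc ↦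
        hy.2 (hyc ▸ apply_mem_seg (by omega) hc)
    have hlast := h.subset_seg_of_sdiff_subset_singleton (by omega) (by omega) hA hB hsdiff
      (Or.inr (apply_mem_seg (a := i + t) (by omega) (by omega)))
    rw [apply_mem_seg_iff h.injective (by omega) (by omega)] at hlast
    omega
  obtain rfl : c = i + 2 + t - 1 := by omega
  rwa [insert_last_seg (by omega)] at hB

theorem left_seg_of_emod_two_eq (h : IsOrthogonalCover P Q t e) (ht : 3 ≤ t) (hn : 4 * t ≤ n + 5)
    (hi : P (seg e i t)) (hij : j % 2 = i % 2) : P (seg e j t) := by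
  have hstep (m : ℕ) : P (seg e (i + 2 * m) t) := by
    induction m with
    | zero => simpa using hi
    | succ m ih =>
      have := h.left_seg_add_two ht hn ih
      rwa [add_assoc, ← mul_add_one, ← Nat.cast_succ] at this
  have : NeZero n := ⟨by omega⟩
  obtain ⟨q, rfl⟩ : ∃ q : ℤ, j = i + 2 * q := ⟨(j - i) / 2, by omega⟩
  obtain ⟨m, hm⟩ := ZMod.natCast_zmod_surjective (q : ZMod n)
  rw [seg_congr (k := i + 2 * m) (by simp [hm])]
  exact hstep m

end IsOrthogonalCover

theorem statement_6_general {n t : ℕ} {P Q : Set α → Prop} {e : ZMod n → α}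
    (h : IsOrthogonalCover P Q t e) (ht : 3 ≤ t) (hn : 4 * t - 5 ≤ n) {i j : ℤ}
    (hi : P (seg e i t)) (hij : j % 2 = i % 2) :
    (∀ C : Set α, P C → C.ncard = t → seg e j (t - 1) ⊆ C → C = seg e j t) ∧
    (∀ C : Set α, P C → C.ncard = t → seg e (j + 1) (t - 1) ⊆ C → C = seg e j t) := by
  have hj := h.left_seg_of_emod_two_eq ht (by omega) hi hij
  refine ⟨fun C hC hcard hsub ↦ ?_, fun C hC hcard hsub ↦ ?_⟩
  · exact h.eq_seg_of_seg_subset (by omega) (by omega) hj hC hcard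
      (seg_subset_seg le_rfl (by omega)) hsub
  · exact h.eq_seg_of_seg_subset (by omega) (by omega) hj hC hcard
      (seg_subset_seg (by omega) (by omega)) hsub

/-- With `t ≥ 3` and `n ≥ 6t-10`: (i) if `σ[i, i+t-1]` is a `t`-element
circuit, then for every `j ≡ i (mod 2)`, every `t`-element circuit containing `X_j` equals
`σ[j, j+t-1]`, and every `t`-element circuit containing `X_{j+1}` equals `σ[j, j+t-1]`;
(ii) the same with circuits replaced by cocircuits. -/
theorem statement_6 (M : Matroid α) (t n : ℕ) (ht : 3 ≤ t) (hn : 6 * t - 10 ≤ n)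
    (e : ZMod n → α) (he : CyclicPropOrd M t e) :
    (∀ i : ℤ, Cct M (seg e i t) →
      ∀ j : ℤ, j % 2 = i % 2 →
        (∀ C : Set α, Cct M C → C.ncard = t → seg e j (t - 1) ⊆ C → C = seg e j t) ∧
        (∀ C : Set α, Cct M C → C.ncard = t → seg e (j + 1) (t - 1) ⊆ C → C = seg e j t)) ∧
    (∀ i : ℤ, Cct M✶ (seg e i t) →
      ∀ j : ℤ, j % 2 = i % 2 →
        (∀ C : Set α, Cct M✶ C → C.ncard = t → seg e j (t - 1) ⊆ C → C = seg e j t) ∧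
        (∀ C : Set α, Cct M✶ C → C.ncard = t → seg e (j + 1) (t - 1) ⊆ C → C = seg e j t)) := by
  have hcover := he.isOrthogonalCover
  exact ⟨fun i hi j hij ↦ statement_6_general hcover ht (by omega) hi hij,
    fun i hi j hij ↦ statement_6_general hcover.symm ht (by omega) hi hij⟩

end CyclicArr
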